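/- Let ε ≤ 1/20, let n be a positive integer divisible by 16, and let W be a candidate routing matrix for parameters ε and n. If π₁, …, π_n are independent, uniformly random permutations of {1,…,n}, then the probability that the schedule induced by W on the instance I(π₁,…,π_n) is collision-free is at most (15/16)^{n²/128}. -/

import Mathlib

/-!
Only critical edges matter, and only crossings without a preceding wait during the times `[n, 2n)`.

Distinctness of the parking times and of the arrival times leaves at most `n² / 20` units of
waiting in total (`sum_wt_le`). Hence, whatever the permutations are, about `2 n² / 5` or more of
these crossings take place during `n` time steps, and by convexity there are order `n³` pairs of
packets crossing critical edges simultaneously.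

Expose the packets one after the other. For packet `i`, first reveal where the critical edges at
which it waits are placed; this fixes its timetable, and its remaining critical edges are still
arranged uniformly at random. Let `used` be the edges crossed by earlier packets at a given time.
Revealing the remaining edges one position at a time, the packet hits the `used` set at the `l`-th
position with conditional probability at least `(#used - l - #(columns with waits)) / n`. So the
conditional probability of no collision is at most `exp (-gain / n)` (`card_avoid_le`); the average
of this bound over two windows of length `n / 2` gives `avgGain`. Thus the weight
`1[no collision] * exp (avgGain / n)` has conditional mean at most `1` (`sum_score_le`), and so has
the product of these weights over all packets (`sum_prod_score_le`). On every collision-free outcome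
the gains add up to at least `n³ / 1920` (`sum_gain_ge`), so the probability of a collision-free
outcome is at most `exp (-n² / 1920)`, and `log (16 / 15) ≤ 1 / 15`.
-/

/-- A routing instance: a finite directed multigraph together with packets
`0,…,k-1`, where packet `i` is given a list of edges `path i`. -/
structure RInst where
  V : Type
  E : Type
  [fintE : Fintype E]
  src : E → V
  dst : E → V
  k : ℕ
  path : Fin k → List E

attribute [instance] RInst.fintE

namespace RInst

/-- The paths are directed paths (consecutive edges fit head-to-tail) and
use no edge more than once. -/
def Valid (I : RInst) : Prop :=
  (∀ i, List.Chain' (fun e f => I.dst e = I.src f) (I.path i)) ∧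
  (∀ i, (I.path i).Nodup)

/-- `σ i t` is the number of edges of `path i` traversed by time `t`. -/
def IsSchedule (I : RInst) (σ : Fin I.k → ℕ → ℕ) : Prop :=
  (∀ i, σ i 0 = 0) ∧
  (∀ i t, σ i (t + 1) = σ i t ∨ σ i (t + 1) = σ i t + 1) ∧
  (∀ i t, σ i t ≤ (I.path i).length)

/-- Packet `i` crosses edge `e` in time step `t+1`. -/
def Crosses (I : RInst) (σ : Fin I.k → ℕ → ℕ) (i : Fin I.k) (e : I.E) (t : ℕ) : Prop :=
  σ i (t + 1) = σ i t + 1 ∧ (I.path i)[σ i t]? = some e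

/-- The load of the schedule is at most `c`: in every time step every edge
is crossed by at most `c` packets. -/
def LoadLE (I : RInst) (σ : Fin I.k → ℕ → ℕ) (c : ℕ) : Prop :=
  ∀ (e : I.E) (t : ℕ), Nat.card {i : Fin I.k | I.Crosses σ i e t} ≤ c

/-- All packets have arrived by time `T` (i.e. the makespan is at most `T`). -/
def CompletedBy (I : RInst) (σ : Fin I.k → ℕ → ℕ) (T : ℕ) : Prop :=
  ∀ i, σ i T = (I.path i).length

/-- The congestion: the maximum number of paths using a common edge. -/
noncomputable def congestion (I : RInst) : ℕ :=
  Finset.univ.sup fun e : I.E => Nat.card {i : Fin I.k | e ∈ I.path i}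

/-- The dilation: the maximum length of a path. -/
noncomputable def dilation (I : RInst) : ℕ :=
  Finset.univ.sup fun i : Fin I.k => (I.path i).length

end RInst

/-! ### The lower-bound instance `I(π₁,…,π_n)` on the graph `G_n` -/

/-- Vertices of `G_n`: `s`, `s'`, `u_1,…,u_{n+1}`, `v_1,…,v_n`, `t`.
(`Fin (n+1)` indexes `u_1,…,u_{n+1}`, `Fin n` indexes `v_1,…,v_n`.) -/
def Vtx (n : ℕ) : Type := Unit ⊕ Unit ⊕ Fin (n + 1) ⊕ Fin n ⊕ Unit

def Vtx.s {n : ℕ} : Vtx n := Sum.inl ()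
def Vtx.s' {n : ℕ} : Vtx n := Sum.inr (Sum.inl ())
def Vtx.u {n : ℕ} (j : Fin (n + 1)) : Vtx n := Sum.inr (Sum.inr (Sum.inl j))
def Vtx.v {n : ℕ} (j : Fin n) : Vtx n := Sum.inr (Sum.inr (Sum.inr (Sum.inl j)))
def Vtx.t {n : ℕ} : Vtx n := Sum.inr (Sum.inr (Sum.inr (Sum.inr ())))

/-- Edges of `G_n`: `(s,s')`, the edges `(s',u_j)` for `1 ≤ j ≤ n`, the critical
edges `e_j = (u_j,v_j)` for `1 ≤ j ≤ n`, the back edges `(v_j,u_{j'})` for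
`j' ≠ j`, and `(u_{n+1},t)`. -/
def Edg (n : ℕ) : Type :=
  Unit ⊕ Fin n ⊕ Fin n ⊕ { p : Fin n × Fin (n + 1) // (p.1 : ℕ) ≠ (p.2 : ℕ) } ⊕ Unit

instance (n : ℕ) : Fintype (Edg n) := by unfold Edg; infer_instance
instance (n : ℕ) : DecidableEq (Edg n) := by unfold Edg; infer_instance

def Edg.start {n : ℕ} : Edg n := Sum.inl ()
def Edg.toU {n : ℕ} (j : Fin n) : Edg n := Sum.inr (Sum.inl j)
def Edg.crit {n : ℕ} (j : Fin n) : Edg n := Sum.inr (Sum.inr (Sum.inl j))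
def Edg.back {n : ℕ} (j : Fin n) (j' : Fin (n + 1)) (h : (j : ℕ) ≠ (j' : ℕ)) : Edg n :=
  Sum.inr (Sum.inr (Sum.inr (Sum.inl ⟨(j, j'), h⟩)))
def Edg.toT {n : ℕ} : Edg n := Sum.inr (Sum.inr (Sum.inr (Sum.inr ())))

def Edg.src {n : ℕ} : Edg n → Vtx n
  | Sum.inl _ => Vtx.s
  | Sum.inr (Sum.inl _) => Vtx.s'
  | Sum.inr (Sum.inr (Sum.inl j)) => Vtx.u j.castSucc
  | Sum.inr (Sum.inr (Sum.inr (Sum.inl p))) => Vtx.v p.1.1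
  | Sum.inr (Sum.inr (Sum.inr (Sum.inr _))) => Vtx.u (Fin.last n)

def Edg.dst {n : ℕ} : Edg n → Vtx n
  | Sum.inl _ => Vtx.s'
  | Sum.inr (Sum.inl j) => Vtx.u j.castSucc
  | Sum.inr (Sum.inr (Sum.inl j)) => Vtx.v j
  | Sum.inr (Sum.inr (Sum.inr (Sum.inl p))) => Vtx.u p.1.2
  | Sum.inr (Sum.inr (Sum.inr (Sum.inr _))) => Vtx.t

/-- The `u`-vertex visited after crossing the `(i+1)`-st critical edge on the
path of `π`: it is `u_{π(i+2)}` (0-based: `(π (i+1)).castSucc`), except after the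
last critical edge, where it is `u_{n+1}` (0-based: `Fin.last n`). -/
def nxt {n : ℕ} (π : Equiv.Perm (Fin n)) (i : Fin n) : Fin (n + 1) :=
  if h : (i : ℕ) + 1 < n then (π ⟨(i : ℕ) + 1, h⟩).castSucc else Fin.last n

theorem nxt_ne {n : ℕ} (π : Equiv.Perm (Fin n)) (i : Fin n) :
    ((π i : ℕ)) ≠ ((nxt π i : ℕ)) := by
  by_cases h : (i : ℕ) + 1 < n
  · simp only [nxt, dif_pos h, Fin.coe_castSucc]
    intro he
    have h2 : π i = π ⟨(i : ℕ) + 1, h⟩ := Fin.val_injective he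
    have h4 : (i : ℕ) = (i : ℕ) + 1 := congrArg Fin.val (π.injective h2)
    omega
  · simp only [nxt, dif_neg h, Fin.val_last]
    exact Nat.ne_of_lt (π i).isLt

/-- The path `P(π) = s, s', u_{π(1)}, v_{π(1)}, u_{π(2)}, v_{π(2)}, …, u_{π(n)},
v_{π(n)}, u_{n+1}, t` as a list of `2n+3` edges (for `n ≥ 1`). -/
def pathOf {n : ℕ} (π : Equiv.Perm (Fin n)) : List (Edg n) :=
  if h : 0 < n then
    Edg.start :: Edg.toU (π ⟨0, h⟩) ::
      ((List.ofFn fun i : Fin n =>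
          [Edg.crit (π i), Edg.back (π i) (nxt π i) (nxt_ne π i)]).flatten ++ [Edg.toT])
  else []

/-- The routing instance `I(π₁,…,π_n)`: the `n` packets with paths
`P(π₁),…,P(π_n)` through `G_n`. -/
def lowerBoundInstance (n : ℕ) (πs : Fin n → Equiv.Perm (Fin n)) : RInst where
  V := Vtx n
  E := Edg n
  src := Edg.src
  dst := Edg.dst
  k := n
  path i := pathOf (πs i)

/-- The arrival time `F_i = W_{i,0} + (2n+3) + Σ_{j=1}^{n+1} W_{i,j}` of packet `i`
under the routing matrix `W` (columns indexed by `Fin (n+2)`, column `0` being the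
parking time at the source). -/
def arrivalTime {n : ℕ} (W : Fin n → Fin (n + 2) → ℕ) (i : Fin n) : ℕ :=
  W i 0 + (2 * n + 3) + ∑ j ∈ Finset.univ.filter (fun j : Fin (n + 2) => j ≠ 0), W i j

/-- A candidate routing matrix for parameters `ε` and `n`: the parking times
`W_{i,0}` are pairwise distinct, the arrival times `F_i` are pairwise distinct,
and `F_i ≤ (3+ε)·n` for every `i`. -/
def IsCandidate (ε : ℝ) (n : ℕ) (W : Fin n → Fin (n + 2) → ℕ) : Prop :=
  Function.Injective (fun i => W i 0) ∧
  Function.Injective (arrivalTime W) ∧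
  ∀ i, (arrivalTime W i : ℝ) ≤ (3 + ε) * n

/-- The time step in which packet `i` crosses the edge at (0-based) position `p` of
its path `P(π_i)` under the schedule induced by the routing matrix `W`: packet `i`
waits `W_{i,0}` time units at `s`, then crosses one edge per time unit except that
it additionally waits `W_{i,j}` time units upon reaching node `u_j` (the wait at
`u_{π_i(j)}` is incurred before the edges at positions `≥ 2j`, and the wait at
`u_{n+1}` before the final edge, at position `2n+2`). -/
def crossTime {n : ℕ} (W : Fin n → Fin (n + 2) → ℕ) (π : Equiv.Perm (Fin n))
    (i : Fin n) (p : ℕ) : ℕ :=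
  W i 0 + (p + 1)
    + ∑ j : Fin n, (if 2 * ((j : ℕ) + 1) ≤ p then
        W i ⟨(π j : ℕ) + 1, by have := (π j).isLt; omega⟩ else 0)
    + (if 2 * n + 2 ≤ p then W i ⟨n + 1, by omega⟩ else 0)

/-- The schedule induced by `W` on `I(π₁,…,π_n)` is collision-free: no two packets
cross the same edge in the same time step. -/
def CollisionFree {n : ℕ} (W : Fin n → Fin (n + 2) → ℕ)
    (πs : Fin n → Equiv.Perm (Fin n)) : Prop :=
  ∀ i i' : Fin n, i ≠ i' → ∀ p p' : ℕ, ∀ e : Edg n,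
    (pathOf (πs i))[p]? = some e → (pathOf (πs i'))[p']? = some e →
    crossTime W (πs i) i p ≠ crossTime W (πs i') i' p'

/-! ### Permutations avoiding prescribed sets -/

open Finset in
/-- One exposure step. Given that `π` avoids the sets `A x` on `S`, each of the at least
`#(A p ∩ Z) - #S` values of `A p ∩ Z` not taken on `S` sits at some position of `P \ S`, and
swapping that position with `p` is a bijection of the surviving permutations. Double counting
the pairs (permutation, swapped position) bounds from below the number of survivors with
`π p ∈ A p`. -/
theorem card_avoid_step {n : ℕ} (C : Finset (Equiv.Perm (Fin n))) (P Z : Finset (Fin n))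
    (hPZ : ∀ π ∈ C, ∀ p, p ∈ P ↔ π p ∈ Z)
    (hswap : ∀ π ∈ C, ∀ p ∈ P, ∀ p' ∈ P, π * Equiv.swap p p' ∈ C)
    (A : Fin n → Finset (Fin n)) (S : Finset (Fin n)) (p : Fin n)
    (hp : p ∈ P) (hpS : p ∉ S) :
    (#{π ∈ C | ∀ x ∈ S, π x ∉ A x} : ℝ) * ((#(A p ∩ Z) : ℝ) - #S) ≤
      #{π ∈ C | (∀ x ∈ S, π x ∉ A x) ∧ π p ∈ A p} * n := by
  classical
  set G := {π ∈ C | ∀ x ∈ S, π x ∉ A x} with hG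
  set bad := {π ∈ C | (∀ x ∈ S, π x ∉ A x) ∧ π p ∈ A p} with hbad
  have h1 : ∀ π ∈ G, (#(A p ∩ Z) : ℝ) - #S ≤ #{x ∈ P \ S | π x ∈ A p} := by
    intro π hπ
    have hπC : π ∈ C := (mem_filter.1 hπ).1
    have hsub : A p ∩ Z ⊆ ({x ∈ P \ S | π x ∈ A p} ∪ S).image π := by
      intro e he
      rw [mem_inter] at he
      refine mem_image.2 ⟨π.symm e, ?_, by simp⟩
      have hP : π.symm e ∈ P := (hPZ π hπC _).2 (by simpa using he.2)
      by_cases hs : π.symm e ∈ S <;> simp [hs, hP, he.1]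
    have := (card_le_card hsub).trans (card_image_le.trans (card_union_le _ _))
    have h2 : (#(A p ∩ Z) : ℝ) ≤ #{x ∈ P \ S | π x ∈ A p} + #S := by exact_mod_cast this
    linarith
  have h2 : ∀ x ∈ P \ S, #{π ∈ G | π x ∈ A p} = #bad := by
    intro x hx
    rw [mem_sdiff] at hx
    have key : ∀ π ∈ G, π * Equiv.swap p x ∈ G := by
      intro π hπ
      rw [hG, mem_filter] at hπ ⊢
      refine ⟨hswap π hπ.1 p hp x hx.1, fun y hy => ?_⟩
      have hyp : y ≠ p := fun h => hpS (h ▸ hy)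
      have hyx : y ≠ x := fun h => hx.2 (h ▸ hy)
      rw [Equiv.Perm.mul_apply, Equiv.swap_apply_of_ne_of_ne hyp hyx]
      exact hπ.2 y hy
    refine card_bij' (fun π _ => π * Equiv.swap p x) (fun π _ => π * Equiv.swap p x) ?_ ?_ ?_ ?_
    · intro π hπ
      rw [mem_filter] at hπ
      have := key π hπ.1
      rw [hG, mem_filter] at this
      rw [hbad, mem_filter]
      exact ⟨this.1, this.2, by simpa using hπ.2⟩
    · intro π hπ
      rw [hbad, mem_filter] at hπ
      rw [mem_filter]
      exact ⟨key π (by rw [hG, mem_filter]; exact ⟨hπ.1, hπ.2.1⟩), by simpa using hπ.2.2⟩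
    · intro π _; simp [mul_assoc]
    · intro π _; simp [mul_assoc]
  have h3 : ∑ π ∈ G, #{x ∈ P \ S | π x ∈ A p} = #(P \ S) * #bad := by
    have hdc := sum_card_bipartiteAbove_eq_sum_card_bipartiteBelow (s := G) (t := P \ S)
      (fun (π : Equiv.Perm (Fin n)) x => π x ∈ A p)
    simp only [bipartiteAbove, bipartiteBelow] at hdc
    rw [hdc, sum_congr rfl h2]
    simp
  have h4 : (#(P \ S) : ℝ) ≤ n := by
    exact_mod_cast (card_le_univ _).trans (by simp)
  calc (#G : ℝ) * ((#(A p ∩ Z) : ℝ) - #S) = ∑ π ∈ G, ((#(A p ∩ Z) : ℝ) - #S) := by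
        rw [sum_const, nsmul_eq_mul]
    _ ≤ ∑ π ∈ G, (#{x ∈ P \ S | π x ∈ A p} : ℝ) := sum_le_sum h1
    _ = #(P \ S) * #bad := by exact_mod_cast h3
    _ ≤ n * #bad := by gcongr
    _ = _ := mul_comm _ _

open Finset in
/-- Permutations in a swap-closed class `C` rarely avoid prescribed sets `A p` at many positions.
The positions of `S` are exposed one by one, the `l`-th one costing a factor
`exp (-(#(A p ∩ Z) - l) / n)`; the sum of the losses `l` is at most `#S ^ 2 / 2`. -/
theorem card_avoid_le {n : ℕ} (hn : 0 < n) (C : Finset (Equiv.Perm (Fin n)))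
    (P Z : Finset (Fin n))
    (hPZ : ∀ π ∈ C, ∀ p, p ∈ P ↔ π p ∈ Z)
    (hswap : ∀ π ∈ C, ∀ p ∈ P, ∀ p' ∈ P, π * Equiv.swap p p' ∈ C)
    (A : Fin n → Finset (Fin n)) (S : Finset (Fin n)) (hS : S ⊆ P) :
    (#{π ∈ C | ∀ x ∈ S, π x ∉ A x} : ℝ) ≤
      #C * Real.exp (-(∑ p ∈ S, (#(A p ∩ Z) : ℝ) - (#S : ℝ) ^ 2 / 2) / n) := by
  classical
  have hn' : (0 : ℝ) < n := by exact_mod_cast hn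
  induction S using Finset.induction_on with
  | empty => simp
  | insert p S hpS ih =>
    have hSP : S ⊆ P := (subset_insert p S).trans hS
    have hp : p ∈ P := hS (mem_insert_self p S)
    have ih := ih hSP
    have hstep := card_avoid_step C P Z hPZ hswap A S p hp hpS
    set G := {π ∈ C | ∀ x ∈ S, π x ∉ A x} with hG
    set bad := {π ∈ C | (∀ x ∈ S, π x ∉ A x) ∧ π p ∈ A p} with hbad
    set G' := {π ∈ C | ∀ x ∈ insert p S, π x ∉ A x} with hG'
    have hcard : #bad + #G' = #G := by
      have e1 : bad = {π ∈ G | π p ∈ A p} := by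
        ext π; simp [hbad, hG, and_assoc]
      have e2 : G' = {π ∈ G | ¬ π p ∈ A p} := by
        ext π; simp [hG', hG]; tauto
      rw [e1, e2, card_filter_add_card_filter_not]
    have hcard' : (#G' : ℝ) = #G - #bad := by
      rw [← hcard]; push_cast; ring
    set y : ℝ := ((#(A p ∩ Z) : ℝ) - #S) / n with hy
    have hG'le : (#G' : ℝ) ≤ #G * Real.exp (-y) := by
      have e := Real.add_one_le_exp (-y)
      have : (#G : ℝ) * y ≤ #bad := by
        rw [hy, ← mul_div_assoc, div_le_iff₀ hn']; exact hstep
      have hg : (0 : ℝ) ≤ #G := by positivity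
      nlinarith
    refine hG'le.trans ?_
    refine (mul_le_mul_of_nonneg_right ih (Real.exp_pos _).le).trans ?_
    rw [mul_assoc, ← Real.exp_add]
    gcongr
    rw [sum_insert hpS, card_insert_of_notMem hpS, hy, ← sub_nonneg]
    have : (0:ℝ) ≤ 1 / 2 / n := by positivity
    refine this.trans (le_of_eq ?_)
    push_cast
    field_simp
    ring

/-! ### Sequential exposure of a uniform tuple -/

open Finset in
/-- Resampling one coordinate of a uniform tuple leaves it uniform: `(x, a)` and
`(update x k a, x k)` are exchanged by an involution. -/
theorem sum_update_eq {n : ℕ} {α : Type*} [Fintype α]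
    (k : Fin n) (h : (Fin n → α) → ℝ) :
    ∑ x : Fin n → α, ∑ a : α, h (Function.update x k a) =
      (Fintype.card α : ℝ) * ∑ x : Fin n → α, h x := by
  classical
  rw [← Fintype.sum_prod_type' (f := fun x a => h (Function.update x k a))]
  have : ∑ x : (Fin n → α) × α, h (Function.update x.1 k x.2) =
      ∑ x : (Fin n → α) × α, h x.1 := by
    refine sum_nbij' (fun x => (Function.update x.1 k x.2, x.1 k))
      (fun x => (Function.update x.1 k x.2, x.1 k)) ?_ ?_ ?_ ?_ ?_ <;> simp
  rw [this, Fintype.sum_prod_type, mul_sum]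
  simp

open Finset in
/-- Tower property for a sequentially exposed tuple: if `f i` depends only on the coordinates
`≤ i` and has conditional mean at most `1` given the coordinates `< i`, then `∏ i, f i` has mean
at most `1`. -/
theorem sum_prod_le {n : ℕ} {α : Type*} [Fintype α] [Nonempty α]
    (f : Fin n → (Fin n → α) → ℝ) (hf : ∀ i x, 0 ≤ f i x)
    (hdep : ∀ i k, i < k → ∀ x a, f i (Function.update x k a) = f i x)
    (hsum : ∀ i x, ∑ a, f i (Function.update x i a) ≤ Fintype.card α) :
    ∑ x : Fin n → α, ∏ i, f i x ≤ Fintype.card (Fin n → α) := by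
  classical
  have hc : (0 : ℝ) < Fintype.card α := by exact_mod_cast Fintype.card_pos
  have key : ∀ k ≤ n, ∑ x : Fin n → α, ∏ i : Fin n with i.val < k, f i x ≤
      Fintype.card (Fin n → α) := by
    intro k
    induction k with
    | zero => intro _; simp
    | succ k ih =>
      intro hk
      refine le_trans ?_ (ih (by omega))
      set K : Fin n := ⟨k, by omega⟩ with hK
      have hfil : (univ.filter fun i : Fin n => i.val < k + 1) =
          insert K (univ.filter fun i : Fin n => i.val < k) := by
        ext i; simp [hK, Fin.ext_iff]; omega
      have hnot : K ∉ (univ.filter fun i : Fin n => i.val < k) := by simp [hK]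
      simp_rw [hfil, prod_insert hnot]
      have e := sum_update_eq K (fun x => f K x * ∏ i : Fin n with i.val < k, f i x)
      refine le_of_mul_le_mul_left ?_ hc
      rw [← e, mul_sum]
      refine sum_le_sum fun x _ => ?_
      have e2 : ∀ a, ∏ i : Fin n with i.val < k, f i (Function.update x K a) =
          ∏ i : Fin n with i.val < k, f i x := fun a =>
        prod_congr rfl fun i hi => hdep i K (by
          simp only [mem_filter, mem_univ, true_and] at hi
          exact Fin.lt_def.2 hi) x a
      simp_rw [e2, ← sum_mul]
      exact mul_le_mul_of_nonneg_right (hsum K x) (prod_nonneg fun i _ => hf i x)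
  have := key n le_rfl
  simpa using this

/-! ### Crossing times -/

/-- The waiting time of packet `i` at the tail of the critical edge `e`. -/
def wt {n : ℕ} (W : Fin n → Fin (n + 2) → ℕ) (i : Fin n) (e : Fin n) : ℕ :=
  W i ⟨(e : ℕ) + 1, by have := e.isLt; omega⟩

/-- The time step in which packet `i` crosses its `p`-th critical edge (`p` counted from `0`),
which is the edge at position `2 (p + 1)` of its path. -/
def ct {n : ℕ} (W : Fin n → Fin (n + 2) → ℕ) (i : Fin n) (π : Equiv.Perm (Fin n))
    (p : Fin n) : ℕ :=
  crossTime W π i (2 * ((p : ℕ) + 1))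

theorem ct_eq {n : ℕ} (W : Fin n → Fin (n + 2) → ℕ) (i : Fin n) (π : Equiv.Perm (Fin n))
    (p : Fin n) :
    ct W i π p = W i 0 + (2 * (p : ℕ) + 3) + ∑ j : Fin n, if j ≤ p then wt W i (π j) else 0 := by
  have hp := p.isLt
  have h : ¬ (2 * n + 2 ≤ 2 * ((p : ℕ) + 1)) := by omega
  simp only [ct, crossTime, if_neg h, wt, Fin.le_def]
  have : ∀ j : Fin n, (2 * ((j : ℕ) + 1) ≤ 2 * ((p : ℕ) + 1)) ↔ (j : ℕ) ≤ p := fun j => by omega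
  simp only [this]
  ring

theorem ct_lt {n : ℕ} (W : Fin n → Fin (n + 2) → ℕ) (i : Fin n) (π : Equiv.Perm (Fin n))
    {p p' : Fin n} (h : p < p') : ct W i π p + 2 ≤ ct W i π p' := by
  rw [ct_eq, ct_eq]
  have : (∑ j : Fin n, if j ≤ p then wt W i (π j) else 0) ≤
      ∑ j : Fin n, if j ≤ p' then wt W i (π j) else 0 := by
    refine Finset.sum_le_sum fun j _ => ?_
    by_cases h1 : j ≤ p
    · simp [h1, h1.trans h.le]
    · simp [h1]
  have := Fin.lt_def.1 h
  omega

theorem ct_le {n : ℕ} (W : Fin n → Fin (n + 2) → ℕ) (i : Fin n) (π : Equiv.Perm (Fin n))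
    (p : Fin n) : ct W i π p ≤ W i 0 + (2 * (p : ℕ) + 3) + ∑ e, wt W i e := by
  rw [ct_eq, ← Equiv.sum_comp π (wt W i)]
  gcongr with j
  split_ifs <;> omega

theorem ct_injective {n : ℕ} (W : Fin n → Fin (n + 2) → ℕ) (i : Fin n)
    (π : Equiv.Perm (Fin n)) : Function.Injective (ct W i π) := by
  intro p p' h
  rcases lt_trichotomy p p' with h1 | h1 | h1
  · have := ct_lt W i π h1; omega
  · exact h1
  · have := ct_lt W i π h1; omega

theorem getElem?_flatten_pairs {β : Type*} {n : ℕ} (a b : Fin n → β) (p : Fin n) :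
    ((List.ofFn fun i : Fin n => [a i, b i]).flatten)[2 * (p : ℕ)]? = some (a p) := by
  induction n with
  | zero => exact p.elim0
  | succ n ih =>
    rw [List.ofFn_succ, List.flatten_cons]
    refine Fin.cases ?_ (fun q => ?_) p
    · simp
    · have := ih (fun i => a i.succ) (fun i => b i.succ) q
      simp only [Fin.val_succ]
      rw [List.getElem?_append_right (by simp)]
      simpa [mul_add] using this

theorem pathOf_crit {n : ℕ} (π : Equiv.Perm (Fin n)) (p : Fin n) :
    (pathOf π)[2 * ((p : ℕ) + 1)]? = some (Edg.crit (π p)) := by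
  have hn : 0 < n := p.pos
  have h := getElem?_flatten_pairs (fun i => Edg.crit (π i))
    (fun i => Edg.back (π i) (nxt π i) (nxt_ne π i)) p
  rw [pathOf, dif_pos hn, mul_add, mul_one, List.getElem?_cons_succ, List.getElem?_cons_succ,
    List.getElem?_append_left]
  · exact h
  · exact (List.getElem?_eq_some_iff.1 h).1

theorem ct_ne_of_collisionFree {n : ℕ} {W : Fin n → Fin (n + 2) → ℕ}
    {πs : Fin n → Equiv.Perm (Fin n)} (h : CollisionFree W πs) {i i' : Fin n} (hi : i ≠ i')
    {p p' : Fin n} (hp : πs i p = πs i' p') : ct W i (πs i) p ≠ ct W i' (πs i') p' := by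
  have hcrit := pathOf_crit (πs i') p'
  rw [← hp] at hcrit
  exact h i i' hi _ _ _ (pathOf_crit (πs i) p) hcrit

/-! ### The gain of a packet -/

open Finset in
/-- The critical edges in front of which packet `i` does not wait. -/
def zeroCols {n : ℕ} (W : Fin n → Fin (n + 2) → ℕ) (i : Fin n) : Finset (Fin n) :=
  {e | wt W i e = 0}

open Finset in
/-- The positions at which packet `i` crosses a critical edge without waiting, during the
`n / 2` time steps starting with `lo`. -/
def win {n : ℕ} (W : Fin n → Fin (n + 2) → ℕ) (i : Fin n) (π : Equiv.Perm (Fin n))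
    (lo : ℕ) : Finset (Fin n) :=
  {p | wt W i (π p) = 0 ∧ lo ≤ ct W i π p ∧ ct W i π p < lo + n / 2}

/-- The exponent which `card_avoid_le` provides for the positions `win W i π lo`, when the edges of
`X t` are forbidden at time `t`. -/
noncomputable def gain {n : ℕ} (W : Fin n → Fin (n + 2) → ℕ) (i : Fin n)
    (X : ℕ → Finset (Fin n)) (π : Equiv.Perm (Fin n)) (lo : ℕ) : ℝ :=
  ∑ p ∈ win W i π lo, ((X (ct W i π p) ∩ zeroCols W i).card : ℝ)
    - ((win W i π lo).card : ℝ) ^ 2 / 2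

/-- The average of `gain` over the two halves of the time interval `[n, 2n)`. Using the halves
separately keeps the quadratic loss in `gain` small. -/
noncomputable def avgGain {n : ℕ} (W : Fin n → Fin (n + 2) → ℕ) (i : Fin n)
    (X : ℕ → Finset (Fin n)) (π : Equiv.Perm (Fin n)) : ℝ :=
  (gain W i X π n + gain W i X π (n + n / 2)) / 2

/-! ### Permutations with a common timetable -/

/-- The positions of the critical edges at which packet `i` waits. This determines all its
crossing times, and leaves the arrangement of the remaining critical edges free. -/
def timetable {n : ℕ} (W : Fin n → Fin (n + 2) → ℕ) (i : Fin n) (π : Equiv.Perm (Fin n))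
    (p : Fin n) : Option (Fin n) :=
  if wt W i (π p) = 0 then none else some (π p)

theorem wt_eq_of_timetable {n : ℕ} {W : Fin n → Fin (n + 2) → ℕ} {i : Fin n}
    {π π' : Equiv.Perm (Fin n)} (h : timetable W i π = timetable W i π') (p : Fin n) :
    wt W i (π p) = wt W i (π' p) := by
  have := congrFun h p
  unfold timetable at this
  split_ifs at this with h1 h2
  · rw [h1, h2]
  · simp only [Option.some.injEq] at this
    rw [this]

theorem ct_eq_of_timetable {n : ℕ} {W : Fin n → Fin (n + 2) → ℕ} {i : Fin n}
    {π π' : Equiv.Perm (Fin n)} (h : timetable W i π = timetable W i π') :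
    ct W i π = ct W i π' := by
  funext p
  simp only [ct_eq, wt_eq_of_timetable h]

theorem win_eq_of_timetable {n : ℕ} {W : Fin n → Fin (n + 2) → ℕ} {i : Fin n}
    {π π' : Equiv.Perm (Fin n)} (h : timetable W i π = timetable W i π') (lo : ℕ) :
    win W i π lo = win W i π' lo := by
  simp only [win, ct_eq_of_timetable h, wt_eq_of_timetable h]

theorem avgGain_eq_of_timetable {n : ℕ} {W : Fin n → Fin (n + 2) → ℕ} {i : Fin n}
    {π π' : Equiv.Perm (Fin n)} (h : timetable W i π = timetable W i π')
    (X : ℕ → Finset (Fin n)) : avgGain W i X π = avgGain W i X π' := by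
  simp only [avgGain, gain, win_eq_of_timetable h, ct_eq_of_timetable h]

theorem timetable_swap {n : ℕ} {W : Fin n → Fin (n + 2) → ℕ} {i : Fin n}
    (π : Equiv.Perm (Fin n)) {p p' : Fin n} (hp : wt W i (π p) = 0) (hp' : wt W i (π p') = 0) :
    timetable W i (π * Equiv.swap p p') = timetable W i π := by
  funext x
  by_cases h1 : x = p
  · subst h1; simp [timetable, hp, hp']
  by_cases h2 : x = p'
  · subst h2; simp [timetable, hp, hp']
  simp [timetable, Equiv.swap_apply_of_ne_of_ne h1 h2]

/-- Whenever packet `i` crosses a critical edge without waiting, the edge is not among those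
forbidden at that time. -/
def Avoids {n : ℕ} (W : Fin n → Fin (n + 2) → ℕ) (i : Fin n)
    (X : ℕ → Finset (Fin n)) (π : Equiv.Perm (Fin n)) : Prop :=
  ∀ p, wt W i (π p) = 0 → π p ∉ X (ct W i π p)

open Classical in
/-- The exponential weight of a permutation avoiding `X`, and zero for the others. -/
noncomputable def score {n : ℕ} (W : Fin n → Fin (n + 2) → ℕ) (i : Fin n)
    (X : ℕ → Finset (Fin n)) (π : Equiv.Perm (Fin n)) : ℝ :=
  if Avoids W i X π then Real.exp (avgGain W i X π / n) else 0

open Finset in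
/-- The score has mean at most `1`. Within a class of permutations with a common timetable
`avgGain` is constant, and the fraction of the class avoiding `X` is at most `exp (-gain / n)` for
each half of `[n, 2n)`, hence for the better of the two. -/
theorem sum_score_le {n : ℕ} (hn : 0 < n) (W : Fin n → Fin (n + 2) → ℕ) (i : Fin n)
    (X : ℕ → Finset (Fin n)) :
    ∑ π, score W i X π ≤ Fintype.card (Equiv.Perm (Fin n)) := by
  classical
  have hn' : (0 : ℝ) < n := by exact_mod_cast hn
  rw [← sum_fiberwise univ (timetable W i) (score W i X)]
  have hcard : (Fintype.card (Equiv.Perm (Fin n)) : ℝ) =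
      ∑ κ, (#{π : Equiv.Perm (Fin n) | timetable W i π = κ} : ℝ) := by
    have := card_eq_sum_card_fiberwise (s := (univ : Finset (Equiv.Perm (Fin n))))
      (f := timetable W i) (t := univ) (fun _ _ => by simp)
    rw [card_univ] at this
    exact_mod_cast this
  rw [hcard]
  refine sum_le_sum fun κ _ => ?_
  set C : Finset (Equiv.Perm (Fin n)) := {π | timetable W i π = κ} with hC
  rcases C.eq_empty_or_nonempty with h0 | ⟨π₀, hπ₀⟩
  · simp [h0]
  have hκ : ∀ π ∈ C, timetable W i π = timetable W i π₀ := fun π hπ => by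
    rw [hC, mem_filter] at hπ hπ₀; rw [hπ.2, hπ₀.2]
  have hPZ : ∀ π ∈ C, ∀ p, p ∈ ({p | wt W i (π₀ p) = 0} : Finset (Fin n)) ↔
      π p ∈ zeroCols W i := fun π hπ p => by
    simp [zeroCols, wt_eq_of_timetable (hκ π hπ)]
  have hswap : ∀ π ∈ C, ∀ p ∈ ({p | wt W i (π₀ p) = 0} : Finset (Fin n)),
      ∀ p' ∈ ({p | wt W i (π₀ p) = 0} : Finset (Fin n)), π * Equiv.swap p p' ∈ C := by
    intro π hπ p hp p' hp'
    have h1 := (hPZ π hπ p).1 hp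
    have h2 := (hPZ π hπ p').1 hp'
    rw [zeroCols, mem_filter] at h1 h2
    have h3 : timetable W i π = κ := by rw [hC, mem_filter] at hπ; exact hπ.2
    rw [hC, mem_filter]
    exact ⟨mem_univ _, (timetable_swap π h1.2 h2.2).trans h3⟩
  have main : ∀ lo, (#{π ∈ C | Avoids W i X π} : ℝ) ≤
      #C * Real.exp (-gain W i X π₀ lo / n) := by
    intro lo
    have hsub : win W i π₀ lo ⊆ ({p | wt W i (π₀ p) = 0} : Finset (Fin n)) := by
      intro p hp
      rw [win, mem_filter] at hp
      simp [hp.2.1]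
    refine le_trans ?_ (card_avoid_le hn C _ _ hPZ hswap (fun p => X (ct W i π₀ p)) _ hsub)
    norm_cast
    refine card_le_card fun π hπ => ?_
    rw [mem_filter] at hπ ⊢
    refine ⟨hπ.1, fun p hp => ?_⟩
    have := hπ.2 p (by
      rw [wt_eq_of_timetable (hκ π hπ.1)]
      exact (mem_filter.1 hp).2.1)
    rwa [ct_eq_of_timetable (hκ π hπ.1)] at this
  have main2 : (#{π ∈ C | Avoids W i X π} : ℝ) ≤ #C * Real.exp (-avgGain W i X π₀ / n) := by
    rcases le_total (gain W i X π₀ n) (gain W i X π₀ (n + n / 2)) with h | h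
    · refine (main (n + n / 2)).trans ?_
      gcongr
      unfold avgGain; linarith
    · refine (main n).trans ?_
      gcongr
      unfold avgGain; linarith
  have e : ∑ π ∈ C, score W i X π =
      #{π ∈ C | Avoids W i X π} * Real.exp (avgGain W i X π₀ / n) := by
    have : ∑ π ∈ C with Avoids W i X π, Real.exp (avgGain W i X π₀ / n) =
        #{π ∈ C | Avoids W i X π} * Real.exp (avgGain W i X π₀ / n) := by
      rw [sum_const, nsmul_eq_mul]
    rw [← this]
    conv_rhs => rw [sum_filter]
    refine sum_congr rfl fun π hπ => ?_
    rw [score, avgGain_eq_of_timetable (hκ π hπ)]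
  rw [e]
  calc _ ≤ #C * Real.exp (-avgGain W i X π₀ / n) * Real.exp (avgGain W i X π₀ / n) := by gcongr
    _ = #C := by rw [mul_assoc, ← Real.exp_add]; simp [neg_div]

open Finset in
/-- The critical edges crossed at time `t` by packets with index less than `i`. -/
def used {n : ℕ} (W : Fin n → Fin (n + 2) → ℕ) (πs : Fin n → Equiv.Perm (Fin n))
    (i : Fin n) (t : ℕ) : Finset (Fin n) :=
  {e | ∃ i' < i, ∃ p, πs i' p = e ∧ ct W i' (πs i') p = t}

theorem used_update {n : ℕ} (W : Fin n → Fin (n + 2) → ℕ) (πs : Fin n → Equiv.Perm (Fin n))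
    {i k : Fin n} (h : i ≤ k) (π : Equiv.Perm (Fin n)) :
    used W (Function.update πs k π) i = used W πs i := by
  funext t
  ext e
  simp only [used, Finset.mem_filter, Finset.mem_univ, true_and]
  refine exists_congr fun i' => and_congr_right fun hi' => ?_
  rw [Function.update_of_ne (hi'.trans_le h).ne]

theorem sum_prod_score_le {n : ℕ} (hn : 0 < n) (W : Fin n → Fin (n + 2) → ℕ) :
    ∑ πs : Fin n → Equiv.Perm (Fin n), ∏ i, score W i (used W πs i) (πs i) ≤
      Fintype.card (Fin n → Equiv.Perm (Fin n)) := by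
  refine sum_prod_le (fun i πs => score W i (used W πs i) (πs i)) ?_ ?_ ?_
  · intro i x
    unfold score
    split_ifs <;> positivity
  · intro i k hik x a
    simp only [used_update W x hik.le, Function.update_of_ne hik.ne]
  · intro i x
    simp only [used_update W x le_rfl, Function.update_self]
    exact sum_score_le hn W i _

theorem avoids_of_collisionFree {n : ℕ} {W : Fin n → Fin (n + 2) → ℕ}
    {πs : Fin n → Equiv.Perm (Fin n)} (h : CollisionFree W πs) (i : Fin n) :
    Avoids W i (used W πs i) (πs i) := by
  intro p _ hp
  simp only [used, Finset.mem_filter, Finset.mem_univ, true_and] at hp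
  obtain ⟨i', hlt, p', h1, h2⟩ := hp
  exact ct_ne_of_collisionFree h hlt.ne h1 h2

/-! ### Total waiting time -/

open Finset in
/-- Distinct natural numbers sum to at least `0 + 1 + ⋯ + (n - 1)`. -/
theorem sum_range_le_of_injective {n : ℕ} (f : Fin n → ℕ) (hf : Function.Injective f) :
    n * (n - 1) ≤ 2 * ∑ i, f i := by
  have h := Finset.sum_range_id_mul_two n
  have h2 : ∑ i ∈ range n, i ≤ ∑ i, f i := by
    have hinj : Function.Injective (fun i => (f i : ℤ)) := fun i j h => hf (by simpa using h)
    have h3 := Finset.sum_range_le_sum (s := univ.image fun i => (f i : ℤ)) (c := 0) (by simp)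
    rw [card_image_of_injective _ hinj, sum_image (fun _ _ _ _ h => hinj h), card_univ,
      Fintype.card_fin] at h3
    simp only [zero_add] at h3
    rw [← Nat.cast_le (α := ℤ)]
    push_cast
    exact h3
  omega

open Finset in
/-- The waiting times after departure are small on average: the parking times and the values
`⌊61 n / 20⌋ - F_i` are both families of distinct natural numbers, so each sums to at least
`n (n - 1) / 2`. -/
theorem sum_wt_le {n : ℕ} {ε : ℝ} (hε : ε ≤ 1 / 20) {W : Fin n → Fin (n + 2) → ℕ}
    (hW : IsCandidate ε n W) :
    20 * ∑ i, ∑ e, wt W i e + 40 * n ≤ n * n ∧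
      ∀ i, 20 * (W i 0 + ∑ e, wt W i e) + 60 ≤ 21 * n := by
  obtain ⟨h0, hF, hb⟩ := hW
  have harr : ∀ i, W i 0 + (2 * n + 3) + ∑ e, wt W i e ≤ arrivalTime W i := by
    intro i
    have h1 : ∑ j ∈ univ.filter (fun j : Fin (n + 2) => j ≠ 0), W i j =
        ∑ j : Fin (n + 1), W i j.succ := by
      rw [sum_filter, Fin.sum_univ_succ]
      simp
    rw [arrivalTime, h1, Fin.sum_univ_castSucc]
    have : ∑ e, wt W i e = ∑ e : Fin n, W i e.castSucc.succ := rfl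
    omega
  have hT : ∀ i, 20 * arrivalTime W i ≤ 61 * n := by
    intro i
    have h1 := hb i
    have hn0 : (0 : ℝ) ≤ n := by positivity
    have : (20 * arrivalTime W i : ℝ) ≤ 61 * n := by nlinarith
    exact_mod_cast this
  refine ⟨?_, fun i => ?_⟩
  · have e1 := sum_range_le_of_injective _ h0
    have e2 := sum_range_le_of_injective (fun i => 61 * n / 20 - arrivalTime W i) (by
      intro i j hij
      apply hF
      have := hT i
      have := hT j
      simp only at hij
      omega)
    have e3 : ∑ i, (61 * n / 20 - arrivalTime W i) + ∑ i, (W i 0 + (2 * n + 3) + ∑ e, wt W i e) ≤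
        n * (61 * n / 20) := by
      rw [← sum_add_distrib]
      refine (sum_le_card_nsmul _ _ (61 * n / 20) fun i _ => ?_).trans (by simp)
      have := hT i
      have := harr i
      omega
    simp only [sum_add_distrib, sum_const, card_univ, Fintype.card_fin, smul_eq_mul] at e3
    rcases n with _ | m
    · simp
    simp only [Nat.add_sub_cancel] at e1 e2
    have e4 : 20 * ((m + 1) * (61 * (m + 1) / 20)) ≤ 61 * ((m + 1) * (m + 1)) := by
      have : 20 * (61 * (m + 1) / 20) ≤ 61 * (m + 1) := by omega
      nlinarith
    nlinarith
  · have := hT i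
    have := harr i
    omega

open Finset in
theorem card_win_le {n : ℕ} (h16 : 16 ∣ n) (W : Fin n → Fin (n + 2) → ℕ) (i : Fin n)
    (π : Equiv.Perm (Fin n)) (lo : ℕ) (hlo : 2 ∣ lo) : 4 * #(win W i π lo) ≤ n := by
  have : #(win W i π lo) ≤ #(Ico (lo / 2) (lo / 2 + n / 4)) := by
    refine card_le_card_of_injOn (fun p => ct W i π p / 2) ?_ ?_
    · intro p hp
      simp only [win, coe_filter, mem_univ, true_and, Set.mem_ofPred_eq] at hp
      simp only [coe_Ico, Set.mem_Ico]
      omega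
    · intro p _ p' _ h
      simp only at h
      rcases lt_trichotomy p p' with h1 | h1 | h1
      · have := ct_lt W i π h1; omega
      · exact h1
      · have := ct_lt W i π h1; omega
  rw [Nat.card_Ico] at this
  omega

/-! ### Simultaneous crossings in a collision-free outcome -/

open Finset in
/-- The positions at which packet `i` crosses a critical edge without waiting, at a time in
`[n, 2n)`. -/
def freePos {n : ℕ} (W : Fin n → Fin (n + 2) → ℕ) (i : Fin n) (π : Equiv.Perm (Fin n)) :
    Finset (Fin n) :=
  {p | wt W i (π p) = 0 ∧ n ≤ ct W i π p ∧ ct W i π p < 2 * n}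

open Finset in
theorem freePos_eq {n : ℕ} (h16 : 16 ∣ n) (W : Fin n → Fin (n + 2) → ℕ) (i : Fin n)
    (π : Equiv.Perm (Fin n)) :
    freePos W i π = win W i π n ∪ win W i π (n + n / 2) ∧
      Disjoint (win W i π n) (win W i π (n + n / 2)) := by
  constructor
  · ext p
    simp only [freePos, win, mem_union, mem_filter, mem_univ, true_and]
    omega
  · rw [disjoint_left]
    intro p
    simp only [win, mem_filter, mem_univ, true_and]
    omega

open Finset in
theorem card_nonzeroCols_le {n : ℕ} (W : Fin n → Fin (n + 2) → ℕ) (i : Fin n) :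
    #{e | wt W i e ≠ 0} ≤ ∑ e, wt W i e := by
  rw [card_filter]
  refine sum_le_sum fun e _ => ?_
  split_ifs <;> omega

open Finset in
/-- A packet crosses almost `n / 2` critical edges during `[n, 2n)`: its `p`-th critical edge is
crossed between `W i 0 + 2 p + 3` and that time plus its total wait `∑ e, wt W i e`, and the number
of positions with a wait is at most this total too. -/
theorem le_card_freePos {n : ℕ} (W : Fin n → Fin (n + 2) → ℕ) (i : Fin n)
    (π : Equiv.Perm (Fin n)) (hb : 20 * (W i 0 + ∑ e, wt W i e) + 60 ≤ 21 * n) :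
    19 * n ≤ 40 * #(freePos W i π) + 60 * (∑ e, wt W i e) + 20 := by
  have hs := card_nonzeroCols_le W i
  have hNZ : #{p | wt W i (π p) ≠ 0} = #{e | wt W i e ≠ 0} := by
    refine card_bij' (fun p _ => π p) (fun e _ => π.symm e) ?_ ?_ ?_ ?_ <;> simp
  set S := ∑ e, wt W i e with hS
  -- Positions whose crossing time is in `[n, 2n)` whatever the waits accumulated before.
  set D : Finset (Fin n) := {p | n ≤ W i 0 + (2 * (p : ℕ) + 3) ∧
    W i 0 + (2 * (p : ℕ) + 3) + S < 2 * n} with hD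
  have hDsub : D ⊆ freePos W i π ∪ univ.filter fun p => wt W i (π p) ≠ 0 := by
    intro p hp
    rw [hD, mem_filter] at hp
    have h1 := ct_le W i π p
    have h2 := ct_eq W i π p
    simp only [freePos, mem_union, mem_filter, mem_univ, true_and]
    omega
  have hDc := (card_le_card hDsub).trans (card_union_le _ _)
  have hI : #(Ico ((n - 3 - W i 0 + 1) / 2) ((2 * n - 3 - W i 0 - S + 1) / 2)) ≤ #D := by
    refine card_le_card_of_surjOn (fun p => (p : ℕ)) ?_
    intro x hx
    simp only [coe_Ico, Set.mem_Ico] at hx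
    refine ⟨⟨x, by omega⟩, ?_, rfl⟩
    simp only [hD, coe_filter, mem_univ, true_and, Set.mem_ofPred_eq]
    omega
  rw [Nat.card_Ico] at hI
  omega

open Finset in
/-- The packets that cross a critical edge at time `t` without waiting in front of it. -/
def crossing {n : ℕ} (W : Fin n → Fin (n + 2) → ℕ) (πs : Fin n → Equiv.Perm (Fin n))
    (t : ℕ) : Finset (Fin n) :=
  {i | ∃ p, wt W i (πs i p) = 0 ∧ ct W i (πs i) p = t}

open Finset in
theorem sum_freePos_eq {n : ℕ} (W : Fin n → Fin (n + 2) → ℕ)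
    (πs : Fin n → Equiv.Perm (Fin n)) (φ : Fin n → ℕ → ℕ) :
    ∑ i, ∑ p ∈ freePos W i (πs i), φ i (ct W i (πs i) p) =
      ∑ t ∈ Ico n (2 * n), ∑ i ∈ crossing W πs t, φ i t := by
  classical
  have h1 : ∀ i, ∑ p ∈ freePos W i (πs i), φ i (ct W i (πs i) p) =
      ∑ t ∈ (freePos W i (πs i)).image (ct W i (πs i)), φ i t := fun i => by
    rw [sum_image (fun _ _ _ _ h => ct_injective W i (πs i) h)]
  simp_rw [h1]
  refine sum_comm' fun i t => ?_
  simp only [mem_univ, true_and, mem_image, freePos, crossing, mem_filter, mem_Ico]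
  constructor
  · rintro ⟨p, ⟨h, h2⟩, rfl⟩
    exact ⟨⟨p, h, rfl⟩, h2⟩
  · rintro ⟨⟨p, h, rfl⟩, h2⟩
    exact ⟨p, ⟨h, h2⟩, rfl⟩

open Finset in
theorem two_mul_sum_card_lt {n : ℕ} (E : Finset (Fin n)) :
    2 * ∑ i ∈ E, #{i' ∈ E | i' < i} + #E = #E ^ 2 := by
  have h1 : ∑ i ∈ E, #{i' ∈ E | i' < i} = ∑ i ∈ E, #{i' ∈ E | i < i'} := by
    have := sum_card_bipartiteAbove_eq_sum_card_bipartiteBelow (s := E) (t := E)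
      (fun i i' => i' < i)
    simpa only [bipartiteAbove, bipartiteBelow] using this
  have h2 : ∀ i ∈ E, #{i' ∈ E | i' < i} + #{i' ∈ E | i < i'} + 1 = #E := by
    intro i hi
    have e1 := card_filter_add_card_filter_not (s := E) (fun i' => i' < i)
    have e2 := card_filter_add_card_filter_not (s := {i' ∈ E | ¬ i' < i}) (fun i' => i < i')
    have e3 : ({i' ∈ {i' ∈ E | ¬ i' < i} | i < i'}) = {i' ∈ E | i < i'} := by
      ext x; simp only [mem_filter, not_lt]
      constructor
      · rintro ⟨⟨h, _⟩, h'⟩; exact ⟨h, h'⟩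
      · rintro ⟨h, h'⟩; exact ⟨⟨h, h'.le⟩, h'⟩
    have e4 : ({i' ∈ {i' ∈ E | ¬ i' < i} | ¬ i < i'}) = {i} := by
      ext x; simp only [mem_filter, not_lt, mem_singleton]
      constructor
      · rintro ⟨⟨h, h1⟩, h'⟩; exact le_antisymm h' h1
      · rintro rfl; exact ⟨⟨hi, le_rfl⟩, le_rfl⟩
    rw [e3, e4, card_singleton] at e2
    omega
  have h3 := sum_congr rfl h2
  simp only [sum_add_distrib, sum_const, smul_eq_mul, mul_one, ← h1] at h3
  rw [sq]
  omega

open Finset in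
/-- Without collisions, packets crossing at the same time occupy distinct edges. -/
theorem card_used_ge {n : ℕ} {W : Fin n → Fin (n + 2) → ℕ}
    {πs : Fin n → Equiv.Perm (Fin n)} (h : CollisionFree W πs) (i : Fin n) (t : ℕ) :
    #{i' ∈ crossing W πs t | i' < i} ≤ #(used W πs i t) := by
  classical
  have hex : ∀ i', ∃ p, i' ∈ crossing W πs t → ct W i' (πs i') p = t := by
    intro i'
    by_cases hi : i' ∈ crossing W πs t
    · have := hi
      simp only [crossing, mem_filter, mem_univ, true_and] at this
      obtain ⟨p, _, hp⟩ := this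
      exact ⟨p, fun _ => hp⟩
    · exact ⟨i', fun h => absurd h hi⟩
  choose P hP using hex
  refine card_le_card_of_injOn (fun i' => πs i' (P i')) ?_ ?_
  · intro i' hi'
    simp only [coe_filter, Set.mem_ofPred_eq] at hi'
    simp only [used, coe_filter, mem_univ, true_and, Set.mem_ofPred_eq]
    exact ⟨i', hi'.2, P i', rfl, hP i' hi'.1⟩
  · intro i₁ h₁ i₂ h₂ heq
    simp only [coe_filter, Set.mem_ofPred_eq] at h₁ h₂
    by_contra hne
    exact ct_ne_of_collisionFree h hne heq ((hP i₁ h₁.1).trans (hP i₂ h₂.1).symm)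

open Finset in
/-- Every collision-free outcome has a large total gain. With `V` crossings without wait in the
`n` time steps of `[n, 2n)`, the number of pairs crossing simultaneously is at least
`(V ^ 2 / n - V) / 2` by the Cauchy–Schwarz inequality, and `V ≥ 2 n² / 5`; the losses come from
the columns with nonzero wait and from the quadratic term of `gain`. -/
theorem sum_gain_ge {n : ℕ} (hn : 0 < n) (h16 : 16 ∣ n) {ε : ℝ} (hε : ε ≤ 1 / 20)
    {W : Fin n → Fin (n + 2) → ℕ} (hW : IsCandidate ε n W)
    {πs : Fin n → Equiv.Perm (Fin n)} (h : CollisionFree W πs) :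
    (n : ℝ) ^ 3 / 1920 ≤ ∑ i, avgGain W i (used W πs i) (πs i) := by
  classical
  obtain ⟨hσ, hb⟩ := sum_wt_le hε hW
  set s : Fin n → ℕ := fun i => ∑ e, wt W i e with hs
  set q : Fin n → ℕ := fun i => #(freePos W i (πs i)) with hq
  have hn' : (0 : ℝ) < n := by exact_mod_cast hn
  have h2q : ∀ i, 2 * q i ≤ n := by
    intro i
    obtain ⟨e1, e2⟩ := freePos_eq h16 W i (πs i)
    have c1 := card_win_le h16 W i (πs i) n (by omega)
    have c2 := card_win_le h16 W i (πs i) (n + n / 2) (by omega)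
    have : q i = #(win W i (πs i) n) + #(win W i (πs i) (n + n / 2)) := by
      rw [hq]; simp only; rw [e1, card_union_of_disjoint e2]
    omega
  have hgain : ∀ i, 2 * avgGain W i (used W πs i) (πs i) ≥
      ∑ p ∈ freePos W i (πs i), (#(used W πs i (ct W i (πs i) p)) : ℝ)
        - n / 2 * s i - n / 8 * q i := by
    intro i
    obtain ⟨e1, e2⟩ := freePos_eq h16 W i (πs i)
    have c1 := card_win_le h16 W i (πs i) n (by omega)
    have c2 := card_win_le h16 W i (πs i) (n + n / 2) (by omega)
    have hqi : (q i : ℝ) = #(win W i (πs i) n) + #(win W i (πs i) (n + n / 2)) := by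
      rw [hq]; simp only; rw [e1, card_union_of_disjoint e2]; push_cast; rfl
    have c1' : (4 : ℝ) * #(win W i (πs i) n) ≤ n := by exact_mod_cast c1
    have c2' : (4 : ℝ) * #(win W i (πs i) (n + n / 2)) ≤ n := by exact_mod_cast c2
    have hZ : ∀ X : Finset (Fin n), (#X : ℝ) - s i ≤ #(X ∩ zeroCols W i) := by
      intro X
      have hsub : X ⊆ (X ∩ zeroCols W i) ∪ univ.filter fun e => wt W i e ≠ 0 := by
        intro e he
        simp only [zeroCols, mem_union, mem_inter, mem_filter, mem_univ, true_and]
        tauto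
      have h1 := (card_le_card hsub).trans (card_union_le _ _)
      have h2 := card_nonzeroCols_le W i
      have h3 : #X ≤ #(X ∩ zeroCols W i) + s i := by simp only [hs]; omega
      have : (#X : ℝ) ≤ #(X ∩ zeroCols W i) + s i := by exact_mod_cast h3
      linarith
    have hsum : ∑ p ∈ freePos W i (πs i), (#(used W πs i (ct W i (πs i) p)) : ℝ)
        - q i * s i ≤ ∑ p ∈ freePos W i (πs i),
          (#(used W πs i (ct W i (πs i) p) ∩ zeroCols W i) : ℝ) := by
      have : (q i : ℝ) * s i = ∑ p ∈ freePos W i (πs i), (s i : ℝ) := by simp [hq]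
      rw [this, ← sum_sub_distrib]
      exact sum_le_sum fun p _ => hZ _
    have hg : 2 * avgGain W i (used W πs i) (πs i) = ∑ p ∈ freePos W i (πs i),
          (#(used W πs i (ct W i (πs i) p) ∩ zeroCols W i) : ℝ)
          - (#(win W i (πs i) n) : ℝ) ^ 2 / 2 - (#(win W i (πs i) (n + n / 2)) : ℝ) ^ 2 / 2 := by
      rw [e1, sum_union e2]
      unfold avgGain gain
      ring
    have hqs : (q i : ℝ) * s i ≤ n / 2 * s i := by
      have : (2 : ℝ) * q i ≤ n := by exact_mod_cast h2q i
      have : (0 : ℝ) ≤ s i := by positivity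
      nlinarith
    have p1 : (0 : ℝ) ≤ #(win W i (πs i) n) := by positivity
    have p2 : (0 : ℝ) ≤ #(win W i (πs i) (n + n / 2)) := by positivity
    rw [hg, hqi]
    nlinarith
  set V : ℝ := ∑ i, (q i : ℝ) with hV
  set σ : ℝ := ∑ i, (s i : ℝ) with hσ'
  set z : ℕ → ℕ := fun t => #(crossing W πs t) with hz
  have hVz : V = ∑ t ∈ Ico n (2 * n), (z t : ℝ) := by
    have := sum_freePos_eq W πs (fun _ _ => 1)
    simp only [sum_const, smul_eq_mul, mul_one] at this
    rw [hV]
    exact_mod_cast this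
  have hCS : V ^ 2 ≤ n * ∑ t ∈ Ico n (2 * n), (z t : ℝ) ^ 2 := by
    have := sq_sum_le_card_mul_sum_sq (s := Ico n (2 * n)) (f := fun t => (z t : ℝ))
    rw [Nat.card_Ico, show 2 * n - n = n by omega] at this
    rwa [hVz]
  have hU : ∑ i, ∑ p ∈ freePos W i (πs i), (#(used W πs i (ct W i (πs i) p)) : ℝ) ≥
      (∑ t ∈ Ico n (2 * n), (z t : ℝ) ^ 2 - V) / 2 := by
    have e1 := sum_freePos_eq W πs (fun i t => #{i' ∈ crossing W πs t | i' < i})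
    have e2 : ∑ t ∈ Ico n (2 * n), (2 * ∑ i ∈ crossing W πs t, #{i' ∈ crossing W πs t | i' < i}
        + z t) = ∑ t ∈ Ico n (2 * n), z t ^ 2 :=
      sum_congr rfl fun t _ => two_mul_sum_card_lt _
    rw [sum_add_distrib, ← mul_sum, ← e1] at e2
    have e3 : ∑ i, ∑ p ∈ freePos W i (πs i), #{i' ∈ crossing W πs (ct W i (πs i) p) | i' < i} ≤
        ∑ i, ∑ p ∈ freePos W i (πs i), #(used W πs i (ct W i (πs i) p)) :=
      sum_le_sum fun i _ => sum_le_sum fun p _ => card_used_ge h i _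
    have e2' : (2 : ℝ) * (∑ i, ∑ p ∈ freePos W i (πs i),
        #{i' ∈ crossing W πs (ct W i (πs i) p) | i' < i} : ℕ) + ∑ t ∈ Ico n (2 * n), (z t : ℝ) =
        ∑ t ∈ Ico n (2 * n), (z t : ℝ) ^ 2 := by exact_mod_cast e2
    have e3' : ((∑ i, ∑ p ∈ freePos W i (πs i),
        #{i' ∈ crossing W πs (ct W i (πs i) p) | i' < i} : ℕ) : ℝ) ≤
        ∑ i, ∑ p ∈ freePos W i (πs i), (#(used W πs i (ct W i (πs i) p)) : ℝ) := by
      exact_mod_cast e3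
    rw [← hVz] at e2'
    linarith
  have hVlow : 19 * (n : ℝ) ^ 2 ≤ 40 * V + 60 * σ + 20 * n := by
    have : ∀ i, 19 * (n : ℝ) ≤ 40 * q i + 60 * s i + 20 := fun i => by
      exact_mod_cast le_card_freePos W i (πs i) (hb i)
    have := sum_le_sum (s := univ) fun i _ => this i
    simp only [sum_add_distrib, ← mul_sum, sum_const, card_univ, Fintype.card_fin,
      nsmul_eq_mul] at this
    rw [hV, hσ']
    linarith
  have hσle : 20 * σ + 40 * n ≤ (n : ℝ) ^ 2 := by
    rw [hσ', sq]; exact_mod_cast hσ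
  have htot : 2 * ∑ i, avgGain W i (used W πs i) (πs i) ≥
      (∑ t ∈ Ico n (2 * n), (z t : ℝ) ^ 2 - V) / 2 - n / 2 * σ - n / 8 * V := by
    have := sum_le_sum (s := univ) fun i _ => hgain i
    simp only [sum_sub_distrib, ← mul_sum] at this
    rw [hV, hσ'] at *
    linarith
  have hVbig : 2 / 5 * (n : ℝ) ^ 2 ≤ V := by linarith
  have hZ2 : 2 / 5 * (n : ℝ) * V ≤ ∑ t ∈ Ico n (2 * n), (z t : ℝ) ^ 2 := by
    refine le_of_mul_le_mul_left ?_ hn'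
    nlinarith
  have hσ2 : (n : ℝ) * σ ≤ n ^ 3 / 20 - 2 * n ^ 2 := by nlinarith
  -- The budget for waits would be negative for smaller `n`.
  have hn40 : (40 : ℝ) ≤ n := by
    have : 0 ≤ σ := by positivity
    nlinarith
  have hnV : (2 / 5 * n ^ 2) * (3 / 40 * n - 1 / 2 : ℝ) ≤ V * (3 / 40 * n - 1 / 2) :=
    mul_le_mul_of_nonneg_right hVbig (by linarith)
  have hpos3 := pow_pos hn' 3
  have hpos2 := pow_pos hn' 2
  nlinarith [hpos3, hpos2]

/-- Let `ε ≤ 1/20`, let `n > 0` be divisible by `16`, and let `W`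
be a candidate routing matrix for parameters `ε`, `n`. For independent uniformly
random permutations `π₁,…,π_n` (a uniform tuple `πs`), the probability that the
schedule induced by `W` on `I(π₁,…,π_n)` is collision-free is at most
`(15/16)^{n²/128}`. -/
theorem fixed_matrix_collision_probability (ε : ℝ) (hε : ε ≤ 1 / 20)
    (n : ℕ) (hn : 0 < n) (h16 : 16 ∣ n)
    (W : Fin n → Fin (n + 2) → ℕ) (hW : IsCandidate ε n W) :
    (Nat.card {πs : Fin n → Equiv.Perm (Fin n) // CollisionFree W πs} : ℝ)
      ≤ ((15 : ℝ) / 16) ^ ((n : ℝ) ^ 2 / 128) *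
          (Nat.card (Fin n → Equiv.Perm (Fin n)) : ℝ) := by
  classical
  have hn' : (0 : ℝ) < n := by exact_mod_cast hn
  set c : ℝ := Real.exp ((n : ℝ) ^ 2 / 1920) with hc
  have hterm : ∀ πs, (if CollisionFree W πs then c else 0) ≤
      ∏ i, score W i (used W πs i) (πs i) := by
    intro πs
    split_ifs with h
    · have : ∀ i, score W i (used W πs i) (πs i) =
          Real.exp (avgGain W i (used W πs i) (πs i) / n) := fun i =>
        if_pos (avoids_of_collisionFree h i)
      simp only [this]
      rw [← Real.exp_sum, hc, ← Finset.sum_div]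
      refine Real.exp_le_exp.2 ?_
      rw [le_div_iff₀ hn']
      refine le_trans (le_of_eq ?_) (sum_gain_ge hn h16 hε hW h)
      ring
    · refine Finset.prod_nonneg fun i _ => ?_
      unfold score
      split_ifs <;> positivity
  have hsum := (Finset.sum_le_sum fun πs _ => hterm πs).trans (sum_prod_score_le hn W)
  rw [← Finset.sum_filter, Finset.sum_const, nsmul_eq_mul] at hsum
  have hcard : (Nat.card {πs : Fin n → Equiv.Perm (Fin n) // CollisionFree W πs} : ℝ) =
      (Finset.univ.filter fun πs => CollisionFree W πs).card := by
    rw [Nat.card_eq_fintype_card, Fintype.card_subtype]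
  have hpow : 1 / c ≤ ((15 : ℝ) / 16) ^ ((n : ℝ) ^ 2 / 128) := by
    rw [hc, one_div, ← Real.exp_neg, Real.rpow_def_of_pos (by norm_num)]
    refine Real.exp_le_exp.2 ?_
    -- `(1 / 15) / 128 = 1 / 1920`.
    have hl : -(1 / 15) ≤ Real.log (15 / 16) := by
      have := Real.one_sub_inv_le_log_of_pos (x := 15 / 16) (by norm_num)
      norm_num at this ⊢
      linarith
    have : (0 : ℝ) ≤ (n : ℝ) ^ 2 := by positivity
    nlinarith
  have hcpos : 0 < c := Real.exp_pos _
  rw [hcard, Nat.card_eq_fintype_card]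
  calc _ ≤ 1 / c * (Fintype.card (Fin n → Equiv.Perm (Fin n)) : ℝ) := by
        rw [one_div, ← div_eq_inv_mul, le_div_iff₀ hcpos]; exact hsum
    _ ≤ _ := by gcongr
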